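/- Let $U \subseteq \mathbb{C}^{n-1} \times \mathbb{C}$ be an open set star-shaped in the last variable (i.e., if $(z', z_n) \in U$ then $(z', t z_n) \in U$ for all $t \in [0,1]$), and let $a : U \to \mathbb{C}$ be a smooth function with $a(z', 0) = 0$ whenever $(z',0) \in U$. Then there exist smooth functions $A, B : U \to \mathbb{C}$ such that $a(z', z_n) = A(z', z_n)\, z_n + B(z', z_n)\, \bar z_n$ for all $(z', z_n) \in U$. -/

import Mathlib

open Set

/-!
Differentiating `t ↦ f (x, t • y)` and integrating over `[0, 1]` gives
`f (x, y) - f (x, 0) = B (x, y) y`, where `B (x, y) : F →L[ℝ] G` is the average of the partial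
derivative of `f` along the segment from `(x, 0)` to `(x, y)`. The operator `B` is smooth in
`(x, y)` by differentiation under the integral sign. When `F = ℂ`, splitting `B` into its `ℂ`-linear
and `ℂ`-antilinear parts gives the coefficients of `z` and `conj z`.
-/

open Filter MeasureTheory Complex
open scoped Topology ComplexConjugate

section ParametricIntegral

variable {X T G : Type*} [TopologicalSpace X] [TopologicalSpace T] [NormedAddCommGroup G]
  {U : Set X} {K : Set T} {F : X × T → G} {x : X}

lemma continuousOn_slice (hF : ContinuousOn F (U ×ˢ K)) (hx : x ∈ U) :
    ContinuousOn (fun t ↦ F (x, t)) K :=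
  hF.comp (by fun_prop) fun _ ht ↦ ⟨hx, ht⟩

lemma exists_eventually_forall_norm_le (hK : IsCompact K) (hU : U ∈ 𝓝 x)
    (hF : ContinuousOn F (U ×ˢ K)) : ∃ C, ∀ᶠ y in 𝓝 x, ∀ t ∈ K, ‖F (y, t)‖ ≤ C := by
  have hx : x ∈ U := mem_of_mem_nhds hU
  obtain ⟨C, hC⟩ := hK.exists_bound_of_continuousOn (continuousOn_slice hF hx)
  have h_local : ∀ t ∈ K, ∀ᶠ z : X × T in 𝓝 (x, t), z.2 ∈ K → ‖F (z.1, z.2)‖ ≤ C + 1 := by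
    intro t ht
    have h_lt : ∀ᶠ z in 𝓝[U ×ˢ K] (x, t), ‖F z‖ < C + 1 :=
      (hF (x, t) ⟨hx, ht⟩).norm.eventually_lt_const ((hC t ht).trans_lt (lt_add_one C))
    filter_upwards [eventually_nhdsWithin_iff.1 h_lt, continuousAt_fst.eventually_mem hU]
      with z hz hzU hzK using (hz ⟨hzU, hzK⟩).le
  refine ⟨C + 1, ?_⟩
  filter_upwards [hK.eventually_forall_of_forall_eventually
    (P := fun y t ↦ t ∈ K → ‖F (y, t)‖ ≤ C + 1) h_local] with y hy t ht
    using hy t ht ht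

variable [MeasurableSpace T] [OpensMeasurableSpace T] {μ : Measure T} [IsFiniteMeasureOnCompacts μ]
  [NormedSpace ℝ G]

lemma continuousOn_setIntegral_of_isCompact [FirstCountableTopology X] (hU : IsOpen U)
    (hK : IsCompact K) (hKm : MeasurableSet K) (hF : ContinuousOn F (U ×ˢ K)) :
    ContinuousOn (fun x ↦ ∫ t in K, F (x, t) ∂μ) U := by
  intro x hx
  obtain ⟨C, hC⟩ := exists_eventually_forall_norm_le hK (hU.mem_nhds hx) hF
  refine (continuousAt_of_dominated (bound := fun _ ↦ C) ?_ ?_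
    (integrableOn_const hK.measure_ne_top) ?_).continuousWithinAt
  · filter_upwards [hU.mem_nhds hx] with y hy
    exact (continuousOn_slice hF hy).aestronglyMeasurable_of_isCompact hK hKm
  · filter_upwards [hC] with y hy using ae_restrict_of_forall_mem hKm hy
  · refine ae_restrict_of_forall_mem hKm fun t ht ↦ ?_
    exact (hF.comp (g := F) (f := fun y ↦ (y, t)) (by fun_prop) fun _ hy ↦ ⟨hy, ht⟩).continuousAt
      (hU.mem_nhds hx)

end ParametricIntegral

section ParametricIntegralDeriv

variable {E T G : Type*} [NormedAddCommGroup E] [NormedSpace ℝ E] [NormedAddCommGroup G]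
  [NormedSpace ℝ G] {U : Set E} {K : Set T} {F : E × T → G}

lemma curryLeft_integral [MeasurableSpace T] {μ : Measure T} {k : ℕ}
    (f : T → E [×(k + 1)]→L[ℝ] G) : (∫ t, f t ∂μ).curryLeft = ∫ t, (f t).curryLeft ∂μ :=
  (ContinuousLinearEquiv.integral_comp_comm (𝕜 := ℝ) (E := E [×(k + 1)]→L[ℝ] G)
    (F := E →L[ℝ] E [×k]→L[ℝ] G)
    (continuousMultilinearCurryLeftEquiv ℝ (fun _ ↦ E) G).toContinuousLinearEquiv f).symm

section TopologicalParameter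

variable [TopologicalSpace T] [MeasurableSpace T] [OpensMeasurableSpace T] {μ : Measure T}
  [IsFiniteMeasureOnCompacts μ]

lemma hasFDerivAt_setIntegral_of_isCompact {F' : E × T → E →L[ℝ] G} (hU : IsOpen U)
    (hK : IsCompact K) (hKm : MeasurableSet K) (hF : ContinuousOn F (U ×ˢ K))
    (hF' : ContinuousOn F' (U ×ˢ K))
    (h_deriv : ∀ x ∈ U, ∀ t ∈ K, HasFDerivAt (fun y ↦ F (y, t)) (F' (x, t)) x)
    {x : E} (hx : x ∈ U) :
    HasFDerivAt (fun y ↦ ∫ t in K, F (y, t) ∂μ) (∫ t in K, F' (x, t) ∂μ) x := by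
  obtain ⟨C, hC⟩ := exists_eventually_forall_norm_le hK (hU.mem_nhds hx) hF'
  refine hasFDerivAt_integral_of_dominated_of_fderiv_le (F := fun y t ↦ F (y, t))
    (F' := fun y t ↦ F' (y, t)) (bound := fun _ ↦ C) (inter_mem (hU.mem_nhds hx) hC)
    ?_ ((continuousOn_slice hF hx).integrableOn_compact' hK hKm)
    ((continuousOn_slice hF' hx).aestronglyMeasurable_of_isCompact hK hKm)
    (ae_restrict_of_forall_mem hKm fun t ht y hy ↦ hy.2 t ht)
    (integrableOn_const hK.measure_ne_top)
    (ae_restrict_of_forall_mem hKm fun t ht y hy ↦ h_deriv y hy.1 t ht)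
  filter_upwards [hU.mem_nhds hx] with y hy
  exact (continuousOn_slice hF hy).aestronglyMeasurable_of_isCompact hK hKm

lemma hasFTaylorSeriesUpToOn_setIntegral_of_isCompact {n : WithTop ℕ∞}
    {p : E × T → FormalMultilinearSeries ℝ E G} (hU : IsOpen U)
    (hK : IsCompact K) (hKm : MeasurableSet K)
    (hp : ∀ t ∈ K, HasFTaylorSeriesUpToOn n (fun x ↦ F (x, t)) (fun x ↦ p (x, t)) U)
    (hp_cont : ∀ k : ℕ, k ≤ n → ContinuousOn (fun q ↦ p q k) (U ×ˢ K)) :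
    HasFTaylorSeriesUpToOn n (fun x ↦ ∫ t in K, F (x, t) ∂μ)
      (fun x k ↦ ∫ t in K, p (x, t) k ∂μ) U where
  zero_eq x hx :=
    calc (∫ t in K, p (x, t) 0 ∂μ).curry0
      _ = ∫ t in K, (p (x, t) 0).curry0 ∂μ :=
        ((continuousMultilinearCurryFin0 ℝ E G).toContinuousLinearEquiv.integral_comp_comm _).symm
      _ = ∫ t in K, F (x, t) ∂μ :=
        setIntegral_congr_fun hKm fun t ht ↦ (hp t ht).zero_eq x hx
  fderivWithin k hk x hx := by
    have h_cont : ContinuousOn (fun q ↦ (p q (k + 1)).curryLeft) (U ×ˢ K) :=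
      (continuousMultilinearCurryLeftEquiv ℝ (fun _ ↦ E) G).continuous.comp_continuousOn
        (hp_cont _ (ENat.add_one_natCast_le_withTop_of_lt hk))
    rw [curryLeft_integral]
    exact (hasFDerivAt_setIntegral_of_isCompact hU hK hKm (hp_cont k hk.le) h_cont
      (fun y hy t ht ↦ ((hp t ht).fderivWithin k hk y hy).hasFDerivAt (hU.mem_nhds hy))
      hx).hasFDerivWithinAt
  cont k hk := continuousOn_setIntegral_of_isCompact hU hK hKm (hp_cont k hk)

end TopologicalParameter

theorem contDiffOn_setIntegral_of_isCompact [NormedAddCommGroup T] [NormedSpace ℝ T]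
    [MeasurableSpace T] [OpensMeasurableSpace T] {μ : Measure T} [IsFiniteMeasureOnCompacts μ]
    {n : ℕ∞} {V : Set (E × T)} (hU : IsOpen U) (hK : IsCompact K) (hV : IsOpen V)
    (hUV : U ×ˢ K ⊆ V) (hF : ContDiffOn ℝ n F V) :
    ContDiffOn ℝ n (fun x ↦ ∫ t in K, F (x, t) ∂μ) U := by
  let insertAt (t : T) : E →ᴬ[ℝ] E × T :=
    (ContinuousAffineMap.id ℝ E).prod (ContinuousAffineMap.const ℝ E t)
  have h_taylor := hF.ftaylorSeriesWithin hV.uniqueDiffOn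
  let p (q : E × T) : FormalMultilinearSeries ℝ E G := fun k ↦
    (ftaylorSeriesWithin ℝ F V q k).compContinuousLinearMap fun _ ↦ .inl ℝ E T
  refine (hasFTaylorSeriesUpToOn_setIntegral_of_isCompact (p := p) hU hK hK.measurableSet
    (fun t ht ↦ ?_) fun k hk ↦ ?_).contDiffOn
  · exact (h_taylor.comp_continuousAffineMap (insertAt t)).mono fun x hx ↦ hUV ⟨hx, ht⟩
  · exact (isBoundedLinearMap_continuousMultilinearMap_comp_linear
      (.inl ℝ E T)).continuous.comp_continuousOn ((h_taylor.cont k hk).mono hUV)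

end ParametricIntegralDeriv

section Hadamard

variable {E F G : Type*} [NormedAddCommGroup E] [NormedSpace ℝ E] [NormedAddCommGroup F]
  [NormedSpace ℝ F] [NormedAddCommGroup G] [NormedSpace ℝ G] {U : Set (E × F)} {f : E × F → G}

/-- The average over the segment from `(x, 0)` to `(x, y)` of the partial derivative of `f` in the
second variable: the operator `B` in Hadamard's formula `f (x, y) - f (x, 0) = B (x, y) y`.
The Bochner integral makes it `0` when `G` is not complete. -/
noncomputable def fiberAverageDeriv (f : E × F → G) (p : E × F) : F →L[ℝ] G :=
  ∫ t in Icc (0 : ℝ) 1, fderiv ℝ f (p.1, t • p.2) ∘L .inr ℝ E F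

lemma contDiffOn_fiberAverageDeriv {n : ℕ∞} (hU : IsOpen U)
    (h_star : ∀ p ∈ U, ∀ t ∈ Icc (0 : ℝ) 1, (p.1, t • p.2) ∈ U) (hf : ContDiffOn ℝ (n + 1) f U) :
    ContDiffOn ℝ n (fiberAverageDeriv f) U := by
  let scale (q : (E × F) × ℝ) : E × F := (q.1.1, q.2 • q.1.2)
  have h_scale : ContDiff ℝ n scale := by fun_prop
  have h_integrand : ContDiffOn ℝ n (fun q ↦ fderiv ℝ f (scale q) ∘L .inr ℝ E F) (scale ⁻¹' U) :=
    ((hf.fderiv_of_isOpen hU le_rfl).comp h_scale.contDiffOn (mapsTo_preimage _ _)).clm_comp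
      contDiffOn_const
  exact contDiffOn_setIntegral_of_isCompact hU isCompact_Icc (hU.preimage h_scale.continuous)
    (fun q hq ↦ h_star q.1 hq.1 q.2 hq.2) h_integrand

lemma fiberAverageDeriv_apply_snd [CompleteSpace G] (hU : IsOpen U) (hf : ContDiffOn ℝ 1 f U)
    {p : E × F} (hp : ∀ t ∈ Icc (0 : ℝ) 1, (p.1, t • p.2) ∈ U) :
    fiberAverageDeriv f p p.2 = f p - f (p.1, 0) := by
  let f' (t : ℝ) : F →L[ℝ] G := fderiv ℝ f (p.1, t • p.2) ∘L .inr ℝ E F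
  have h_cont : ContinuousOn f' (Icc 0 1) :=
    ((hf.continuousOn_fderiv_of_isOpen hU le_rfl).comp (by fun_prop) hp).clm_comp
      continuousOn_const
  have h_deriv : ∀ t ∈ uIcc (0 : ℝ) 1,
      HasDerivAt (fun s : ℝ ↦ f (p.1, s • p.2)) (f' t p.2) t := by
    intro t ht
    rw [uIcc_of_le zero_le_one] at ht
    have hf_at := (hf.differentiableOn one_ne_zero).differentiableAt (hU.mem_nhds (hp t ht))
    have h_segment : HasDerivAt (fun s : ℝ ↦ (p.1, s • p.2)) (0, p.2) t := by
      simpa using (hasDerivAt_const t p.1).prodMk ((hasDerivAt_id t).smul_const p.2)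
    exact hf_at.hasFDerivAt.comp_hasDerivAt t h_segment
  have h_int : IntervalIntegrable (fun t ↦ f' t p.2) volume 0 1 := by
    refine ContinuousOn.intervalIntegrable ?_
    rw [uIcc_of_le zero_le_one]
    exact h_cont.clm_apply continuousOn_const
  calc fiberAverageDeriv f p p.2
    _ = ∫ t in Icc 0 1, f' t p.2 :=
      ContinuousLinearMap.integral_apply h_cont.integrableOn_Icc p.2
    _ = ∫ t in 0..1, f' t p.2 := by
      rw [integral_Icc_eq_integral_Ioc, intervalIntegral.integral_of_le zero_le_one]
    _ = f (p.1, (1 : ℝ) • p.2) - f (p.1, (0 : ℝ) • p.2) :=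
      intervalIntegral.integral_eq_sub_of_hasDerivAt h_deriv h_int
    _ = f p - f (p.1, 0) := by simp only [one_smul, zero_smul, Prod.mk.eta]

end Hadamard

section ComplexLinearParts

variable {G : Type*} [NormedAddCommGroup G] [NormedSpace ℂ G]

/-- The coefficient `∂L` of the `ℂ`-linear part of a real-linear map
`L z = z • ∂L + conj z • ∂̄L`; for `L` the derivative of a function, this is its Wirtinger
derivative with respect to `z`. -/
noncomputable def linearCoeff : (ℂ →L[ℝ] G) →L[ℝ] G :=
  (1 / 2 : ℂ) • (.apply ℝ G 1 - I • .apply ℝ G I)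

/-- The coefficient `∂̄L` of the `ℂ`-antilinear part of a real-linear map
`L z = z • ∂L + conj z • ∂̄L`; for `L` the derivative of a function, this is its Wirtinger
derivative with respect to `conj z`. -/
noncomputable def antilinearCoeff : (ℂ →L[ℝ] G) →L[ℝ] G :=
  (1 / 2 : ℂ) • (.apply ℝ G 1 + I • .apply ℝ G I)

lemma smul_linearCoeff_add_conj_smul_antilinearCoeff (L : ℂ →L[ℝ] G) (z : ℂ) :
    z • linearCoeff L + conj z • antilinearCoeff L = L z := by
  have h_re_im : L z = (z.re : ℂ) • L 1 + (z.im : ℂ) • L I := by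
    rw [coe_smul, coe_smul, ← map_smul, ← map_smul, ← map_add, real_smul, real_smul, mul_one,
      re_add_im]
  have h_re : (z.re : ℂ) = (z + conj z) / 2 := re_eq_add_conj z
  have h_im : (z.im : ℂ) = (z - conj z) / 2 * -I := by
    rw [im_eq_sub_conj, ← div_div, div_I, mul_neg]
  rw [h_re_im, h_re, h_im]
  simp only [linearCoeff, antilinearCoeff, smul_apply, add_apply, sub_apply,
    ContinuousLinearMap.apply_apply]
  module

end ComplexLinearParts

theorem hadamard_decomposition_general {E G : Type*} [NormedAddCommGroup E] [NormedSpace ℝ E]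
    [NormedAddCommGroup G] [NormedSpace ℂ G] [CompleteSpace G] {n : ℕ∞} {U : Set (E × ℂ)}
    (hU : IsOpen U) (h_star : ∀ p ∈ U, ∀ t ∈ Icc (0 : ℝ) 1, (p.1, t • p.2) ∈ U)
    {a : E × ℂ → G} (ha : ContDiffOn ℝ (n + 1) a U) :
    ∃ A B : E × ℂ → G, ContDiffOn ℝ n A U ∧ ContDiffOn ℝ n B U ∧
      ∀ p ∈ U, a p = a (p.1, 0) + p.2 • A p + conj p.2 • B p := by
  have h_smooth := contDiffOn_fiberAverageDeriv hU h_star ha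
  refine ⟨fun p ↦ linearCoeff (fiberAverageDeriv a p),
    fun p ↦ antilinearCoeff (fiberAverageDeriv a p),
    (linearCoeff (G := G)).contDiff.comp_contDiffOn h_smooth,
    (antilinearCoeff (G := G)).contDiff.comp_contDiffOn h_smooth, fun p hp ↦ ?_⟩
  rw [add_assoc, smul_linearCoeff_add_conj_smul_antilinearCoeff,
    fiberAverageDeriv_apply_snd hU (ha.of_le le_add_self) (h_star p hp), add_sub_cancel]

/-- **Hadamard-type lemma (cf. Milnor, Lemma 2.1), fibrewise version.**  Let
`U ⊆ ℂ^{n-1} × ℂ` be an open set star-shaped in the last variable, and let `a : U → ℂ` be a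
smooth function vanishing on the slice `{z_n = 0}`.  Then `a = A z_n + B z̄_n` for smooth
functions `A, B` on `U`. -/
theorem hadamard_decomposition {m : ℕ} (U : Set ((Fin m → ℂ) × ℂ))
    (hU : IsOpen U)
    (hstar : ∀ p ∈ U, ∀ t : ℝ, t ∈ Icc (0:ℝ) 1 → (p.1, (t : ℂ) * p.2) ∈ U)
    (a : (Fin m → ℂ) × ℂ → ℂ)
    (ha : ContDiffOn ℝ (⊤ : ℕ∞) a U)
    (hvanish : ∀ z' : Fin m → ℂ, ((z', (0:ℂ)) ∈ U) → a (z', 0) = 0) :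
    ∃ A B : (Fin m → ℂ) × ℂ → ℂ,
      ContDiffOn ℝ (⊤ : ℕ∞) A U ∧ ContDiffOn ℝ (⊤ : ℕ∞) B U ∧
      ∀ p ∈ U, a p = A p * p.2 + B p * (starRingEnd ℂ) p.2 := by
  simp only [← real_smul] at hstar
  obtain ⟨A, B, hA, hB, h_decomp⟩ := hadamard_decomposition_general (n := ⊤) hU hstar ha
  refine ⟨A, B, hA, hB, fun p hp ↦ ?_⟩
  have h_zero : a (p.1, 0) = 0 := hvanish p.1 (by simpa using hstar p hp 0 (by simp))
  rw [h_decomp p hp, h_zero, zero_add, smul_eq_mul, smul_eq_mul, mul_comm p.2, mul_comm (conj p.2)]
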